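/- Let H be a complex Hilbert space with grading operator ε (ε self-adjoint, ε² = 1) and F a bounded operator with F² = 1 and Fε = −εF. If θ is a bounded odd operator on H (εθ = −θε) such that the graded commutator [F,θ] = Fθ + θF is trace class, then Tr_s(θ) := (1/2)·Trace(εF[F,θ]) = 0. -/

import Mathlib

open scoped ENNReal

noncomputable section

variable {H : Type*} [NormedAddCommGroup H] [InnerProductSpace ℂ H] [CompleteSpace H]

/-- The `n`-th singular value of a (compact) operator `T`, described via approximation
numbers: the distance from `T` to the operators of rank at most `n`.  For a compact operator
on a Hilbert space this agrees with the `(n+1)`-st largest eigenvalue of `√(T*T)`. -/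
def sval (T : H →L[ℂ] H) (n : ℕ) : ℝ :=
  sInf {c : ℝ | ∃ R : H →L[ℂ] H,
    Module.rank ℂ (LinearMap.range (R : H →ₗ[ℂ] H)) ≤ (n : Cardinal) ∧ c = ‖T - R‖}

/-- The `p`-Schatten norm `‖T‖_p = (Σ_n s_n(T)^p)^(1/p)`, valued in `ℝ≥0∞`. -/
def schattenNorm (p : ℝ) (T : H →L[ℂ] H) : ℝ≥0∞ :=
  (∑' n : ℕ, ENNReal.ofReal (sval T n ^ p)) ^ (1 / p)

/-- `T` belongs to the `p`-th Schatten class: it is compact with finite `p`-Schatten norm. -/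
def MemSchatten (p : ℝ) (T : H →L[ℂ] H) : Prop :=
  IsCompactOperator (⇑T) ∧ schattenNorm p T < ⊤

/-- The trace `Σ_i ⟪e_i, T e_i⟫` of an operator, computed in a (choice of) Hilbert basis of
`H`.  For a trace-class operator this is the trace, independent of the choice of basis. -/
def opTrace (T : H →L[ℂ] H) : ℂ :=
  ∑' i : (exists_hilbertBasis ℂ H).choose,
    @inner ℂ H _ ((exists_hilbertBasis ℂ H).choose_spec.choose i)
      (T ((exists_hilbertBasis ℂ H).choose_spec.choose i))



lemma sval_set_nonempty (T : H →L[ℂ] H) (n : ℕ) :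
    ({c : ℝ | ∃ R : H →L[ℂ] H,
    Module.rank ℂ (LinearMap.range (R : H →ₗ[ℂ] H)) ≤ (n : Cardinal) ∧ c = ‖T - R‖}).Nonempty := by
  refine ⟨‖T - 0‖, 0, ?_, rfl⟩
  simp

lemma sval_set_bdd (T : H →L[ℂ] H) (n : ℕ) :
    BddBelow {c : ℝ | ∃ R : H →L[ℂ] H,
    Module.rank ℂ (LinearMap.range (R : H →ₗ[ℂ] H)) ≤ (n : Cardinal) ∧ c = ‖T - R‖} := by
  refine ⟨0, ?_⟩
  rintro c ⟨R, -, rfl⟩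
  exact norm_nonneg _

lemma sval_nonneg (T : H →L[ℂ] H) (n : ℕ) : 0 ≤ sval T n := by
  apply Real.sInf_nonneg
  rintro c ⟨R, -, rfl⟩
  exact norm_nonneg _

lemma sval_anti (T : H →L[ℂ] H) {m n : ℕ} (h : m ≤ n) : sval T n ≤ sval T m := by
  apply csInf_le_csInf (sval_set_bdd T n) (sval_set_nonempty T m)
  rintro c ⟨R, hR, rfl⟩
  exact ⟨R, hR.trans (by exact_mod_cast h), rfl⟩

lemma exists_approx (T : H →L[ℂ] H) (n : ℕ) {δ : ℝ} (hδ : 0 < δ) :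
    ∃ R : H →L[ℂ] H, Module.rank ℂ (LinearMap.range (R : H →ₗ[ℂ] H)) ≤ (n : Cardinal) ∧
      ‖T - R‖ ≤ sval T n + δ := by
  obtain ⟨c, ⟨R, hR, rfl⟩, hc⟩ := Real.lt_sInf_add_pos (sval_set_nonempty T n) hδ
  exact ⟨R, hR, hc.le⟩

lemma summable_sval (T : H →L[ℂ] H) (h : MemSchatten 1 T) : Summable (sval T) := by
  have h2 := h.2
  simp only [schattenNorm, Real.rpow_one, div_one, ENNReal.rpow_one] at h2
  have := ENNReal.summable_toReal h2.ne
  refine this.congr fun n => ?_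
  exact ENNReal.toReal_ofReal (sval_nonneg T n)

/-- `T` is a nuclear sum of rank one operators. -/
def NucRep {ι : Type} (T : H →L[ℂ] H) (u v : ι → H) : Prop :=
  Summable (fun k => ‖u k‖ * ‖v k‖) ∧ ∀ x, HasSum (fun k => (inner ℂ (v k) x : ℂ) • u k) (T x)

lemma finrank_rep (R : H →L[ℂ] H) (m : ℕ)
    (hR : Module.rank ℂ (LinearMap.range (R : H →ₗ[ℂ] H)) ≤ (m : Cardinal)) :
    ∃ (d : ℕ) (u v : Fin d → H), d ≤ m ∧ (∀ k, ‖u k‖ ≤ 1) ∧ (∀ k, ‖v k‖ ≤ ‖R‖) ∧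
      ∀ x, R x = ∑ k, (inner ℂ (v k) x : ℂ) • u k := by
  have hfd : Module.Finite ℂ (LinearMap.range (R : H →ₗ[ℂ] H)) :=
    Module.rank_lt_aleph0_iff.mp (hR.trans_lt Cardinal.natCast_lt_aleph0)
  let b := stdOrthonormalBasis ℂ (LinearMap.range (R : H →ₗ[ℂ] H))
  have hb : ∀ k, ‖((b k : LinearMap.range (R : H →ₗ[ℂ] H)) : H)‖ = 1 := fun k => b.norm_eq_one k
  refine ⟨_, fun k => (b k : H), fun k => ContinuousLinearMap.adjoint R (b k : H), ?_,
    fun k => (hb k).le, fun k => ?_, fun x => ?_⟩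
  · exact Module.finrank_le_of_rank_le hR
  · refine (ContinuousLinearMap.le_opNorm _ _).trans ?_
    rw [hb k, mul_one]
    exact (LinearIsometryEquiv.norm_map _ R).le
  · have := congrArg (Subtype.val) (b.sum_repr' ⟨R x, LinearMap.mem_range_self (R : H →ₗ[ℂ] H) x⟩)
    simp only [AddSubmonoidClass.coe_finsetSum, Submodule.coe_smul, Submodule.coe_inner] at this
    rw [← this]
    simp only [ContinuousLinearMap.adjoint_inner_left]

lemma nucRep_of_series (T : H →L[ℂ] H) (D : ℕ → H →L[ℂ] H) (m : ℕ → ℕ)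
    (hD : ∀ n, Module.rank ℂ (LinearMap.range (D n : H →ₗ[ℂ] H)) ≤ (m n : Cardinal))
    (hs : Summable fun n => (m n : ℝ) * ‖D n‖) (hT : ∀ x, HasSum (fun n => D n x) (T x)) :
    ∃ (ι : Type) (u v : ι → H), NucRep T u v := by
  choose d u v hd hu hv hx using fun n => finrank_rep (D n) (m n) (hD n)
  refine ⟨Σ n, Fin (d n), fun k => u k.1 k.2, fun k => v k.1 k.2, ?_⟩
  have hsum : Summable (fun k : Σ n, Fin (d n) => ‖u k.1 k.2‖ * ‖v k.1 k.2‖) := by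
    rw [summable_sigma_of_nonneg (fun k => by positivity)]
    refine ⟨fun n => (hasSum_fintype _).summable, ?_⟩
    refine Summable.of_nonneg_of_le (fun n => tsum_nonneg fun k => by positivity) (fun n => ?_) hs
    rw [tsum_fintype]
    calc ∑ k, ‖u n k‖ * ‖v n k‖ ≤ ∑ k : Fin (d n), ‖D n‖ := by
          refine Finset.sum_le_sum fun k _ => ?_
          have := mul_le_mul (hu n k) (hv n k) (norm_nonneg _) zero_le_one
          simpa using this
      _ = (d n : ℝ) * ‖D n‖ := by simp
      _ ≤ _ := by
          have : (d n : ℝ) ≤ m n := by exact_mod_cast hd n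
          gcongr
  refine ⟨hsum, fun x => ?_⟩
  have hsx : Summable (fun k : Σ n, Fin (d n) => (inner ℂ (v k.1 k.2) x : ℂ) • u k.1 k.2) := by
    refine Summable.of_norm_bounded (hsum.mul_right ‖x‖) fun k => ?_
    rw [norm_smul]
    have := norm_inner_le_norm (𝕜 := ℂ) (v k.1 k.2) x
    nlinarith [norm_nonneg (u k.1 k.2)]
  have h1 : HasSum (fun n => D n x) (∑' k : Σ n, Fin (d n), (inner ℂ (v k.1 k.2) x : ℂ) • u k.1 k.2) := by
    refine hsx.hasSum.sigma (fun n => ?_)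
    rw [hx n x]
    exact hasSum_fintype _
  rw [(hT x).unique h1]
  exact hsx.hasSum

lemma rank_sub_le (A B : H →L[ℂ] H) (a b : ℕ)
    (hA : Module.rank ℂ (LinearMap.range (A : H →ₗ[ℂ] H)) ≤ (a : Cardinal))
    (hB : Module.rank ℂ (LinearMap.range (B : H →ₗ[ℂ] H)) ≤ (b : Cardinal)) :
    Module.rank ℂ (LinearMap.range ((A - B : H →L[ℂ] H) : H →ₗ[ℂ] H)) ≤ ((a + b : ℕ) : Cardinal) := by
  have hle : LinearMap.range ((A - B : H →L[ℂ] H) : H →ₗ[ℂ] H) ≤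
      LinearMap.range (A : H →ₗ[ℂ] H) ⊔ LinearMap.range (B : H →ₗ[ℂ] H) := by
    rintro _ ⟨x, rfl⟩
    exact Submodule.sub_mem_sup (LinearMap.mem_range_self (A : H →ₗ[ℂ] H) x)
      (LinearMap.mem_range_self (B : H →ₗ[ℂ] H) x)
  refine (Submodule.rank_mono hle).trans ((Submodule.rank_add_le_rank_add_rank _ _).trans ?_)
  push_cast
  exact add_le_add hA hB

lemma exists_nucRep (T : H →L[ℂ] H) (h : MemSchatten 1 T) :
    ∃ (ι : Type) (u v : ι → H), NucRep T u v := by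
  have hs := summable_sval T h
  have hc : Summable fun k : ℕ => (2 : ℝ) ^ k * sval T (2 ^ k) :=
    (summable_condensed_iff_of_nonneg (sval_nonneg T) (fun _ _ _ hmn => sval_anti T hmn)).2 hs
  choose R hR hRn using fun n : ℕ => exists_approx T (2 ^ n) (δ := (1 / 4 : ℝ) ^ n) (by positivity)
  have hb : Summable fun n : ℕ => (2 : ℝ) ^ n * ‖T - R n‖ := by
    refine Summable.of_nonneg_of_le (fun n => by positivity) (fun n => ?_)
      (hc.add (summable_geometric_of_lt_one (r := (1 / 2 : ℝ)) (by norm_num) (by norm_num)))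
    have e : (2 : ℝ) ^ n * (1 / 4) ^ n = (1 / 2) ^ n := by
      rw [← mul_pow]; norm_num
    rw [← e, ← mul_add]
    have := hRn n
    gcongr
  let S : ℕ → H →L[ℂ] H := fun n => Nat.casesOn n 0 R
  have hlim : Filter.Tendsto R Filter.atTop (nhds T) := by
    rw [tendsto_iff_norm_sub_tendsto_zero]
    refine squeeze_zero (fun n => norm_nonneg _) (fun n => ?_) hb.tendsto_atTop_zero
    rw [norm_sub_rev]
    exact le_mul_of_one_le_left (norm_nonneg _) (one_le_pow₀ (by norm_num))
  have hsum : Summable fun n => ((2 ^ n + 2 ^ n : ℕ) : ℝ) * ‖S (n + 1) - S n‖ := by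
    rw [← summable_nat_add_iff 1]
    refine Summable.of_nonneg_of_le (fun n => by positivity) (fun n => ?_)
      ((((summable_nat_add_iff 1).2 hb).mul_left 2).add (hb.mul_left 4))
    have h1 : ‖R (n + 1) - R n‖ ≤ ‖T - R (n + 1)‖ + ‖T - R n‖ := by
      have := norm_sub_le (T - R n) (T - R (n + 1))
      rw [sub_sub_sub_cancel_left] at this
      linarith
    show ((2 ^ (n + 1) + 2 ^ (n + 1) : ℕ) : ℝ) * ‖R (n + 1) - R n‖ ≤ _
    push_cast
    have h2 : (0 : ℝ) < 2 ^ n := by positivity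
    rw [pow_succ]
    nlinarith
  refine nucRep_of_series T (fun n => S (n + 1) - S n) (fun n => 2 ^ n + 2 ^ n) (fun n => ?_) hsum ?_
  · apply rank_sub_le
    · exact hR n
    · cases n with
      | zero => simp [S]
      | succ n =>
        refine (hR n).trans ?_
        exact_mod_cast Nat.pow_le_pow_right (by norm_num) (Nat.le_succ n)
  · have hsD : Summable fun n => S (n + 1) - S n := by
      refine Summable.of_norm_bounded hsum fun n => ?_
      refine le_mul_of_one_le_left (norm_nonneg _) ?_
      have : 1 ≤ 2 ^ n + 2 ^ n := le_add_right Nat.one_le_two_pow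
      exact_mod_cast this
    have hS : HasSum (fun n => S (n + 1) - S n) T := by
      rw [hsD.hasSum_iff_tendsto_nat]
      simp only [Finset.sum_range_sub]
      rw [← Filter.tendsto_add_atTop_iff_nat 1]
      simpa [S] using hlim
    intro x
    exact hS.mapL (ContinuousLinearMap.apply ℂ H x)

lemma basis_abs {κ : Type*} (b : HilbertBasis κ ℂ H) (x y : H) :
    Summable (fun i => ‖(inner ℂ x (b i) : ℂ) * inner ℂ (b i) y‖) ∧
    ∑' i, ‖(inner ℂ x (b i) : ℂ) * inner ℂ (b i) y‖ ≤ ‖x‖ * ‖y‖ := by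
  have key : ∀ s : Finset κ, ∑ i ∈ s, ‖(inner ℂ x (b i) : ℂ) * inner ℂ (b i) y‖ ≤ ‖x‖ * ‖y‖ := by
    intro s
    simp only [norm_mul]
    refine (Real.sum_mul_le_sqrt_mul_sqrt s _ _).trans ?_
    refine mul_le_mul ?_ ?_ (Real.sqrt_nonneg _) (norm_nonneg _)
    · apply Real.sqrt_le_iff.2 ⟨norm_nonneg _, ?_⟩
      have := b.orthonormal.sum_inner_products_le x (s := s)
      simpa only [norm_inner_symm] using this
    · apply Real.sqrt_le_iff.2 ⟨norm_nonneg _, ?_⟩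
      exact b.orthonormal.sum_inner_products_le y (s := s)
  have hsum := summable_of_sum_le (fun i => norm_nonneg _) key
  exact ⟨hsum, hsum.tsum_le_of_sum_le key⟩

lemma trace_rep {κ : Type*} (b : HilbertBasis κ ℂ H) {ι : Type} (T : H →L[ℂ] H) (u v : ι → H)
    (h : NucRep T u v) : ∑' i, (inner ℂ (b i) (T (b i)) : ℂ) = ∑' k, (inner ℂ (v k) (u k) : ℂ) := by
  have h1 : ∀ i, (inner ℂ (b i) (T (b i)) : ℂ)
      = ∑' k, (inner ℂ (v k) (b i) : ℂ) * inner ℂ (b i) (u k) := by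
    intro i
    have := (h.2 (b i)).mapL (innerSL ℂ (b i))
    simp only [innerSL_apply_apply, inner_smul_right] at this
    exact this.tsum_eq.symm
  have h2 : ∀ k, (inner ℂ (v k) (u k) : ℂ)
      = ∑' i, (inner ℂ (v k) (b i) : ℂ) * inner ℂ (b i) (u k) := fun k =>
    (b.tsum_inner_mul_inner (v k) (u k)).symm
  simp only [h1, h2]
  have hs : Summable (Function.uncurry fun k i => (inner ℂ (v k) (b i) : ℂ) * inner ℂ (b i) (u k)) := by
    apply Summable.of_norm
    rw [summable_prod_of_nonneg (fun _ => norm_nonneg _)]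
    refine ⟨fun k => (basis_abs b (v k) (u k)).1, ?_⟩
    refine Summable.of_nonneg_of_le (fun k => tsum_nonneg fun _ => norm_nonneg _) (fun k => ?_) h.1
    rw [mul_comm]
    exact (basis_abs b (v k) (u k)).2
  exact hs.tsum_comm

lemma opTrace_rep {ι : Type} (T : H →L[ℂ] H) (u v : ι → H)
    (h : NucRep T u v) : opTrace T = ∑' k, (inner ℂ (v k) (u k) : ℂ) :=
  trace_rep _ T u v h

lemma NucRep.comp {ι : Type} {T : H →L[ℂ] H} {u v : ι → H} (h : NucRep T u v) (A B : H →L[ℂ] H) :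
    NucRep (A * T * B) (fun k => A (u k)) (fun k => ContinuousLinearMap.adjoint B (v k)) := by
  refine ⟨?_, fun x => ?_⟩
  · refine Summable.of_nonneg_of_le (fun k => by positivity) (fun k => ?_)
      (h.1.mul_left (‖A‖ * ‖ContinuousLinearMap.adjoint B‖))
    have := mul_le_mul (A.le_opNorm (u k)) ((ContinuousLinearMap.adjoint B).le_opNorm (v k))
      (norm_nonneg _) (by positivity)
    refine this.trans (le_of_eq (by ring))
  · have := (h.2 (B x)).mapL A
    simp only [ContinuousLinearMap.adjoint_inner_left]
    simp only [map_smul] at this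
    exact this

/-- For a ℤ₂-graded Hilbert space `(H, ε)` and `F` bounded with `F² = 1`, `Fε = -εF`:
if `θ` is a bounded odd operator (`εθ = -θε`) such that the graded commutator
`[F,θ] = Fθ + θF` is trace class, then `Tr_s(θ) = (1/2)·Trace(εF[F,θ]) = 0`. -/
theorem trs_odd_eq_zero (ε F : H →L[ℂ] H) (hε : IsSelfAdjoint ε) (hε2 : ε * ε = 1)
    (hF2 : F * F = 1) (hFε : F * ε = -(ε * F)) (θ : H →L[ℂ] H)
    (hodd : ε * θ = -(θ * ε)) (htc : MemSchatten 1 (F * θ + θ * F)) :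
    (2 : ℂ)⁻¹ * opTrace (ε * F * (F * θ + θ * F)) = 0 := by
  obtain ⟨ι, u, v, h⟩ := exists_nucRep _ htc
  have h1 := h.comp (ε * F) 1
  rw [mul_one] at h1
  have h2 := h1.comp ε ε
  have e : ε * (ε * F * (F * θ + θ * F)) * ε = -(ε * F * (F * θ + θ * F)) := by
    have hC : (F * θ + θ * F) * ε = ε * (F * θ + θ * F) := by
      have a : F * θ * ε = ε * (F * θ) := by
        have : θ * ε = -(ε * θ) := by rw [hodd, neg_neg]
        rw [mul_assoc, this, mul_neg, ← mul_assoc, hFε, neg_mul, neg_neg, mul_assoc]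
      have b : θ * F * ε = ε * (θ * F) := by
        rw [mul_assoc, hFε, mul_neg, ← mul_assoc, ← mul_assoc, hodd, neg_mul]
      rw [add_mul, mul_add, a, b]
    calc ε * (ε * F * (F * θ + θ * F)) * ε = (ε * ε) * F * ((F * θ + θ * F) * ε) := by
          simp only [mul_assoc]
      _ = F * ε * (F * θ + θ * F) := by rw [hε2, one_mul, hC, mul_assoc]
      _ = _ := by rw [hFε, neg_mul]
  rw [e] at h2
  have t1 := opTrace_rep _ _ _ h1
  have t2 := opTrace_rep _ _ _ h2
  have t3 : opTrace (-(ε * F * (F * θ + θ * F))) = -opTrace (ε * F * (F * θ + θ * F)) := by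
    simp only [opTrace, neg_apply, inner_neg_right, tsum_neg]
  have hεε : ∀ x, ε (ε x) = x := fun x => by
    have := congrArg (fun A : H →L[ℂ] H => A x) hε2
    simpa using this
  simp only [ContinuousLinearMap.adjoint_inner_left, hεε] at t1 t2
  have t4 : opTrace (ε * F * (F * θ + θ * F)) = -opTrace (ε * F * (F * θ + θ * F)) := by
    rw [← t3, t2]
    exact t1
  have t5 : opTrace (ε * F * (F * θ + θ * F)) = 0 := self_eq_neg.mp t4
  rw [t5, mul_zero]
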